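/- Fix a positive integer k and constants C₁, C₂ > 0, and suppose N → ∞ with T̄ = T̄(N) satisfying T̄/N ∈ [k+1+C₁, C₂]. For each N let O₁ and O₂ be random T̄×T̄ matrices on a common probability space such that: O₁ is a uniformly random (Haar) orthogonal matrix of determinant 1; the complex eigenvalues of O₂ are almost surely different from −1; and for each ε > 0, Prob(‖O₁ − O₂‖₂ < N^{−1+ε}) → 1 as N → ∞. Write O₁ = [[A₁, B₁],[C₁′, D₁]] and O₂ = [[A₂, B₂],[C₂′, D₂]] in block form according to T̄ = (T̄−N) + N. Then for each ε > 0, Prob( ‖(A₁ − B₁(1_N + D₁)^{−1}C₁′) − (A₂ − B₂(1_N + D₂)^{−1}C₂′)‖₂ < N^{−1+ε} ) → 1 as N → ∞. -/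

import Mathlib

open MeasureTheory ProbabilityTheory Filter Matrix

noncomputable section

instance matMS (m n : Type*) : MeasurableSpace (Matrix m n ℝ) :=
  (inferInstance : MeasurableSpace (m → n → ℝ))

/-- `ν` is the Haar (uniform) probability measure on the special orthogonal group. -/
def IsHaarSO (n : Type*) [Fintype n] [DecidableEq n] (ν : Measure (Matrix n n ℝ)) : Prop :=
  IsProbabilityMeasure ν ∧ (∀ᵐ O ∂ν, Oᵀ * O = 1 ∧ O.det = 1) ∧
    ∀ U : Matrix n n ℝ, Uᵀ * U = 1 → U.det = 1 → ν.map (fun O => U * O) = ν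

/-- spectral norm (largest singular value) of a real matrix. -/
def specNorm {m n : Type*} [Fintype m] [Fintype n] [DecidableEq n] (A : Matrix m n ℝ) : ℝ :=
  ‖LinearMap.toContinuousLinearMap (Matrix.toEuclideanLin A)‖

/-- the matrix `A − B (1 + D)⁻¹ C` built from the blocks of a `(M + N) × (M + N)` matrix
`O = [[A, B], [C, D]]`. -/
def schurLike {M N : ℕ} (O : Matrix (Fin M ⊕ Fin N) (Fin M ⊕ Fin N) ℝ) :
    Matrix (Fin M) (Fin M) ℝ :=
  O.toBlocks₁₁ - O.toBlocks₁₂ * (1 + O.toBlocks₂₂)⁻¹ * O.toBlocks₂₁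

section geom
open scoped Pointwise
variable {ι m n : Type*} [Fintype ι] [Fintype m] [Fintype n]

/-- closed Euclidean ball of radius `r` -/
def bl (ι : Type*) [Fintype ι] (r : ℝ) : Set (ι → ℝ) := {x | x ⬝ᵥ x ≤ r ^ 2}

lemma cont_dot {X : Type*} [TopologicalSpace X] {f g : X → ι → ℝ} (hf : Continuous f)
    (hg : Continuous g) : Continuous (fun x => f x ⬝ᵥ g x) := by
  unfold dotProduct; fun_prop

lemma dot_nonneg (x : ι → ℝ) : 0 ≤ x ⬝ᵥ x := by
  unfold dotProduct
  exact Finset.sum_nonneg fun i _ => mul_self_nonneg _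

lemma dot_add_le (x y : ι → ℝ) : (x + y) ⬝ᵥ (x + y) ≤ 2 * (x ⬝ᵥ x) + 2 * (y ⬝ᵥ y) := by
  unfold dotProduct
  rw [Finset.mul_sum, Finset.mul_sum, ← Finset.sum_add_distrib]
  refine Finset.sum_le_sum fun i _ => ?_
  simp only [Pi.add_apply]
  nlinarith [sq_nonneg (x i - y i)]

lemma dot_sum (x : m ⊕ n → ℝ) :
    x ⬝ᵥ x = (x ∘ Sum.inl) ⬝ᵥ (x ∘ Sum.inl) + (x ∘ Sum.inr) ⬝ᵥ (x ∘ Sum.inr) := by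
  simp [dotProduct, Fintype.sum_sum_type]

lemma meas_bl (r : ℝ) : MeasurableSet (bl ι r) :=
  (isClosed_le (cont_dot continuous_id continuous_id) continuous_const).measurableSet

lemma vol_bl {r : ℝ} (hr : 0 < r) :
    volume (bl ι r) = ENNReal.ofReal r ^ Fintype.card ι * volume (bl ι 1) := by
  have h : bl ι r = r • bl ι 1 := by
    ext x
    rw [Set.mem_smul_set_iff_inv_smul_mem₀ hr.ne']
    simp only [bl, Set.mem_ofPred_eq, smul_dotProduct, dotProduct_smul, smul_eq_mul, one_pow]
    rw [← mul_assoc, ← mul_inv, ← pow_two, inv_mul_le_iff₀ (by positivity), mul_one]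
  rw [h, Measure.addHaar_smul, Module.finrank_fintype_fun_eq_card, abs_of_nonneg (by positivity),
    ENNReal.ofReal_pow hr.le]

lemma vol_bl_pos : volume (bl ι 1) ≠ 0 := by
  have ho : IsOpen {x : ι → ℝ | x ⬝ᵥ x < 1} :=
    isOpen_lt (cont_dot continuous_id continuous_id) continuous_const
  have := ho.measure_pos (volume : Measure (ι → ℝ)) ⟨0, by simp⟩
  refine (this.trans_le (measure_mono ?_)).ne'
  intro x hx
  simp only [bl, Set.mem_ofPred_eq, one_pow] at hx ⊢
  exact hx.le

lemma vol_bl_lt (r : ℝ) : volume (bl ι r) ≠ ⊤ := by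
  have : bl ι r ⊆ Metric.closedBall 0 |r| := by
    intro x hx
    rw [mem_closedBall_zero_iff, pi_norm_le_iff_of_nonneg (abs_nonneg _)]
    intro i
    rw [Real.norm_eq_abs, ← sq_le_sq]
    refine le_trans ?_ hx
    rw [pow_two]
    exact Finset.single_le_sum (f := fun i => x i * x i) (fun i _ => mul_self_nonneg _)
      (Finset.mem_univ i)
  exact ((measure_mono this).trans_lt measure_closedBall_lt_top).ne

lemma vol_prod (A : Set (m → ℝ)) (B : Set (n → ℝ)) (hA : MeasurableSet A) (hB : MeasurableSet B) :
    volume {x : m ⊕ n → ℝ | x ∘ Sum.inl ∈ A ∧ x ∘ Sum.inr ∈ B} = volume A * volume B := by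
  have h := (volume_measurePreserving_sumPiEquivProdPi (fun _ : m ⊕ n => ℝ)).measure_preimage
    (hA.prod hB).nullMeasurableSet
  have h2 : (volume : Measure ((m → ℝ) × (n → ℝ))) (A ×ˢ B) = volume A * volume B :=
    Measure.prod_prod A B
  exact h.trans h2

lemma vol_orth [DecidableEq ι] (U : Matrix ι ι ℝ) (hd : U.det = 1) (A : Set (ι → ℝ))
    (hA : MeasurableSet A) : volume {x | U *ᵥ x ∈ A} = volume A := by
  have h := Real.map_matrix_volume_pi_eq_smul_volume_pi (M := U) (by rw [hd]; norm_num)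
  rw [hd] at h
  simp only [inv_one, abs_one, ENNReal.ofReal_one, one_smul] at h
  conv_rhs => rw [← h]
  rw [Measure.map_apply _ hA]
  · rfl
  · exact (LinearMap.continuous_of_finiteDimensional _).measurable

/-- Householder reflection -/
def hh [DecidableEq ι] (a : ι → ℝ) : Matrix ι ι ℝ := 1 - (2 / (a ⬝ᵥ a)) • vecMulVec a a

lemma hh_mulVec [DecidableEq ι] (a x : ι → ℝ) :
    hh a *ᵥ x = x - (2 * (a ⬝ᵥ x) / (a ⬝ᵥ a)) • a := by
  rw [hh, sub_mulVec, one_mulVec, smul_mulVec, vecMulVec_mulVec]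
  ext i
  simp
  ring

lemma hh_orth [DecidableEq ι] (a : ι → ℝ) (ha : a ⬝ᵥ a ≠ 0) : (hh a)ᵀ * hh a = 1 := by
  have ht : (hh a)ᵀ = hh a := by
    simp [hh, transpose_sub, transpose_smul, transpose_vecMulVec]
  rw [ht]
  simp only [hh, Matrix.sub_mul, Matrix.mul_sub, Matrix.one_mul, Matrix.mul_one, Matrix.smul_mul,
    Matrix.mul_smul, vecMulVec_mul_vecMulVec]
  ext i j
  simp [vecMulVec_apply]
  field_simp
  ring

lemma hh_det [DecidableEq ι] (a : ι → ℝ) (ha : a ⬝ᵥ a ≠ 0) : (hh a).det = -1 := by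
  have : hh a = 1 + replicateCol Unit (-(2 / (a ⬝ᵥ a)) • a) * replicateRow Unit a := by
    ext i j
    simp [hh, vecMulVec_apply, Matrix.mul_apply]
    ring
  rw [this, det_one_add_replicateCol_mul_replicateRow, dotProduct_smul, smul_eq_mul]
  field_simp
  norm_num

lemma dot_self_ne {x : ι → ℝ} (hx : x ≠ 0) : x ⬝ᵥ x ≠ 0 := fun h => hx (dotProduct_self_eq_zero.1 h)

lemma exists_rot [DecidableEq ι] (x y : ι → ℝ) (hxy : x ⬝ᵥ x = y ⬝ᵥ y) (hx : x ≠ 0)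
    (hs : x + y ≠ 0) : ∃ U : Matrix ι ι ℝ, Uᵀ * U = 1 ∧ U.det = 1 ∧ U *ᵥ x = y := by
  have h1 := dot_self_ne hx
  have h2 := dot_self_ne hs
  refine ⟨hh (x + y) * hh x, ?_, ?_, ?_⟩
  · rw [transpose_mul, Matrix.mul_assoc, ← Matrix.mul_assoc _ _ (hh x), hh_orth _ h2,
      Matrix.one_mul, hh_orth _ h1]
  · rw [det_mul, hh_det _ h1, hh_det _ h2]; norm_num
  · rw [← mulVec_mulVec, hh_mulVec x x]
    have e1 : x - (2 * (x ⬝ᵥ x) / (x ⬝ᵥ x)) • x = -x := by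
      rw [mul_div_cancel_right₀ _ h1, two_smul]; abel
    rw [e1, hh_mulVec]
    have e2 : 2 * ((x + y) ⬝ᵥ -x) / ((x + y) ⬝ᵥ (x + y)) = -1 := by
      rw [div_eq_iff h2]
      simp only [dotProduct_neg, add_dotProduct, dotProduct_add]
      rw [dotProduct_comm y x, ← hxy]; ring
    rw [e2]
    ext i; simp

lemma meas_tmul : Measurable (fun p : Matrix ι ι ℝ × (ι → ℝ) => p.1ᵀ *ᵥ p.2) := by
  rw [measurable_pi_iff]
  intro i
  simp only [mulVec, dotProduct, transpose_apply]
  refine Finset.measurable_sum _ fun j _ => Measurable.mul ?_ ?_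
  · exact (measurable_pi_apply i).comp ((measurable_pi_apply j).comp measurable_fst)
  · exact (measurable_pi_apply j).comp measurable_snd

lemma meas_tmul_left (x : ι → ℝ) : Measurable (fun O : Matrix ι ι ℝ => Oᵀ *ᵥ x) :=
  meas_tmul.comp (measurable_id.prodMk measurable_const)

lemma meas_lmul (U : Matrix ι ι ℝ) : Measurable (fun O : Matrix ι ι ℝ => U * O) := by
  refine measurable_pi_iff.2 fun i => measurable_pi_iff.2 fun j => ?_
  simp only [Matrix.mul_apply]
  refine Finset.measurable_sum _ fun k _ => Measurable.const_mul ?_ _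
  exact (measurable_pi_apply j).comp (measurable_pi_apply k)

lemma haar_const [DecidableEq ι] {ν : Measure (Matrix ι ι ℝ)} (hν : IsHaarSO ι ν)
    (S : Set (ι → ℝ)) (hS : MeasurableSet S)
    (hsc : ∀ (c : ℝ) x, c ≠ 0 → (c • x ∈ S ↔ x ∈ S)) (x y : ι → ℝ) (hx : x ≠ 0) (hy : y ≠ 0) :
    ν {O | Oᵀ *ᵥ x ∈ S} = ν {O | Oᵀ *ᵥ y ∈ S} := by
  have sc : ∀ (c : ℝ) (z : ι → ℝ), c ≠ 0 → ν {O | Oᵀ *ᵥ (c • z) ∈ S} = ν {O | Oᵀ *ᵥ z ∈ S} := by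
    intro c z hc
    congr 1
    ext O
    simp only [Set.mem_ofPred_eq, mulVec_smul, hsc c _ hc]
  have hx1 : 0 < x ⬝ᵥ x := lt_of_le_of_ne (dot_nonneg x) (dot_self_ne hx).symm
  have hy1 : 0 < y ⬝ᵥ y := lt_of_le_of_ne (dot_nonneg y) (dot_self_ne hy).symm
  set c := Real.sqrt ((y ⬝ᵥ y) / (x ⬝ᵥ x)) with hc
  have hc0 : 0 < c := Real.sqrt_pos.2 (div_pos hy1 hx1)
  rw [← sc c x hc0.ne']
  have hnorm : (c • x) ⬝ᵥ (c • x) = y ⬝ᵥ y := by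
    rw [smul_dotProduct, dotProduct_smul, smul_eq_mul, smul_eq_mul, ← mul_assoc,
      Real.mul_self_sqrt (div_pos hy1 hx1).le]
    field_simp
  have hcx : c • x ≠ 0 := smul_ne_zero hc0.ne' hx
  generalize c • x = z at *
  by_cases hz : z + y = 0
  · have : y = (-1 : ℝ) • z := by
      rw [neg_one_smul]; exact eq_neg_of_add_eq_zero_right hz
    rw [this, sc (-1) z (by norm_num)]
  · obtain ⟨U, hU, hUd, hUz⟩ := exists_rot z y hnorm hcx hz
    have hinv := hν.2.2 Uᵀ (by rw [transpose_transpose]; exact mul_eq_one_comm.1 hU)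
      (by rw [det_transpose, hUd])
    have hm : MeasurableSet {O : Matrix ι ι ℝ | Oᵀ *ᵥ z ∈ S} := meas_tmul_left z hS
    conv_lhs => rw [← hinv]
    rw [Measure.map_apply (meas_lmul _) hm]
    congr 1
    ext O
    simp only [Set.mem_preimage, Set.mem_ofPred_eq, transpose_mul, transpose_transpose,
      ← mulVec_mulVec, hUz]

lemma orth_dot [DecidableEq ι] (O : Matrix ι ι ℝ) (hO : Oᵀ * O = 1) (x : ι → ℝ) :
    (Oᵀ *ᵥ x) ⬝ᵥ (Oᵀ *ᵥ x) = x ⬝ᵥ x := by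
  have hO' : O * Oᵀ = 1 := mul_eq_one_comm.1 hO
  rw [dotProduct_mulVec, vecMul_transpose, mulVec_mulVec, hO', one_mulVec]

lemma haar_cone [DecidableEq ι] {ν : Measure (Matrix ι ι ℝ)} (hν : IsHaarSO ι ν)
    (S : Set (ι → ℝ)) (hS : MeasurableSet S)
    (hsc : ∀ (c : ℝ) x, c ≠ 0 → (c • x ∈ S ↔ x ∈ S)) (x : ι → ℝ) (hx : x ≠ 0) :
    ν {O | Oᵀ *ᵥ x ∈ S} * volume (bl ι 1) ≤ volume (S ∩ bl ι 1) := by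
  have := hν.1
  have hne : Nonempty ι := by
    by_contra hc
    rw [not_nonempty_iff] at hc
    exact hx (Subsingleton.elim _ _)
  set G : Set (Matrix ι ι ℝ × (ι → ℝ)) := {p | p.1ᵀ *ᵥ p.2 ∈ S ∩ bl ι 1} with hG
  have hGm : MeasurableSet G := meas_tmul (hS.inter (meas_bl 1))
  have h1 : (ν.prod volume) G = volume (S ∩ bl ι 1) := by
    rw [Measure.prod_apply hGm]
    have : ∀ᵐ O ∂ν, volume (Prod.mk O ⁻¹' G) = volume (S ∩ bl ι 1) := by
      filter_upwards [hν.2.1] with O hO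
      exact vol_orth Oᵀ (by rw [det_transpose, hO.2]) _ (hS.inter (meas_bl 1))
    rw [lintegral_congr_ae this, lintegral_const, measure_univ, mul_one]
  rw [← h1, Measure.prod_apply_symm hGm, ← lintegral_indicator_const (meas_bl 1)]
  refine lintegral_mono_ae ?_
  have h0 : ∀ᵐ y : ι → ℝ, y ≠ 0 := by
    rw [ae_iff]; simp
  filter_upwards [h0] with y hy
  by_cases hyb : y ∈ bl ι 1
  · rw [Set.indicator_of_mem hyb, haar_const hν S hS hsc x y hx hy]
    refine measure_mono_ae ?_
    filter_upwards [hν.2.1] with O hO hOS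
    refine ⟨hOS, ?_⟩
    change (Oᵀ *ᵥ y) ⬝ᵥ (Oᵀ *ᵥ y) ≤ 1 ^ 2
    rw [orth_dot O hO.1]
    exact hyb
  · rw [Set.indicator_of_notMem hyb]; exact zero_le

/-- cone of vectors whose first block is small -/
def cone (m n : Type*) [Fintype m] [Fintype n] (r : ℝ) : Set (m ⊕ n → ℝ) :=
  {x | (x ∘ Sum.inl) ⬝ᵥ (x ∘ Sum.inl) ≤ r ^ 2 * (x ⬝ᵥ x)}

lemma cont_inl : Continuous (fun x : m ⊕ n → ℝ => (x ∘ Sum.inl) ⬝ᵥ (x ∘ Sum.inl)) :=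
  cont_dot (Pi.continuous_precomp _) (Pi.continuous_precomp _)

lemma meas_cone (r : ℝ) : MeasurableSet (cone m n r) :=
  (isClosed_le cont_inl (continuous_const.mul (cont_dot continuous_id continuous_id))).measurableSet

lemma cone_scale (r c : ℝ) (x : m ⊕ n → ℝ) (hc : c ≠ 0) : c • x ∈ cone m n r ↔ x ∈ cone m n r := by
  have hc2 : 0 < c * c := mul_self_pos.2 hc
  have e : (c • x) ∘ Sum.inl = c • (x ∘ Sum.inl : m → ℝ) := rfl
  simp only [cone, Set.mem_ofPred_eq, e, smul_dotProduct, dotProduct_smul, smul_eq_mul]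
  rw [← mul_assoc c c, ← mul_assoc c c, mul_left_comm, mul_le_mul_iff_right₀ hc2]

lemma cone_bound [DecidableEq m] [DecidableEq n] {ν : Measure (Matrix (m ⊕ n) (m ⊕ n) ℝ)}
    (hν : IsHaarSO (m ⊕ n) ν) (r : ℝ) (hr : 0 < r) (x : m ⊕ n → ℝ) (hx : x ≠ 0) :
    ν {O | Oᵀ *ᵥ x ∈ cone m n r} ≤
      ENNReal.ofReal ((2 * r) ^ Fintype.card m * 2 ^ Fintype.card n) := by
  have h1 := haar_cone hν (cone m n r) (meas_cone r) (fun c x hc => cone_scale r c x hc) x hx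
  have hup : volume (cone m n r ∩ bl (m ⊕ n) 1) ≤ volume (bl m r) * volume (bl n 1) := by
    rw [← vol_prod _ _ (meas_bl r) (meas_bl 1)]
    refine measure_mono ?_
    rintro y ⟨hy1, hy2⟩
    simp only [cone, bl, Set.mem_ofPred_eq] at hy1 hy2 ⊢
    have := dot_sum y
    have p1 := dot_nonneg (y ∘ Sum.inl : m → ℝ)
    refine ⟨hy1.trans ?_, ?_⟩
    · nlinarith [sq_nonneg r]
    · linarith
  have hlow : volume (bl m (1/2)) * volume (bl n (1/2)) ≤ volume (bl (m ⊕ n) 1) := by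
    rw [← vol_prod _ _ (meas_bl _) (meas_bl _)]
    refine measure_mono ?_
    rintro y ⟨hy1, hy2⟩
    simp only [bl, Set.mem_ofPred_eq] at hy1 hy2 ⊢
    rw [dot_sum y]
    norm_num at *
    linarith
  have h2 := (mul_le_mul_right hlow _).trans (h1.trans hup)
  rw [vol_bl (ι := m) hr, vol_bl (ι := m) (r := 1/2) (by norm_num),
    vol_bl (ι := n) (r := 1/2) (by norm_num)] at h2
  have hm0 := vol_bl_pos (ι := m)
  have hn0 := vol_bl_pos (ι := n)
  have hm1 := vol_bl_lt (ι := m) 1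
  have hn1 := vol_bl_lt (ι := n) 1
  have hne : ν {O | Oᵀ *ᵥ x ∈ cone m n r} ≠ ⊤ := by
    have := hν.1
    exact measure_ne_top _ _
  generalize ν {O | Oᵀ *ᵥ x ∈ cone m n r} = p at *
  generalize volume (bl m 1) = a at *
  generalize volume (bl n 1) = b at *
  lift p to NNReal using hne
  lift a to NNReal using hm1
  lift b to NNReal using hn1
  rw [← ENNReal.toReal_le_toReal (by finiteness) (by finiteness)] at h2
  simp only [ENNReal.toReal_mul, ENNReal.toReal_pow, ENNReal.coe_toReal,
    ENNReal.toReal_ofReal hr.le, ENNReal.toReal_ofReal (show (0:ℝ) ≤ 1/2 by norm_num)] at h2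
  have ha : 0 < (a : ℝ) := by
    refine lt_of_le_of_ne a.2 fun h => hm0 ?_
    rw [ENNReal.coe_eq_zero]; exact NNReal.coe_eq_zero.1 h.symm
  have hb : 0 < (b : ℝ) := by
    refine lt_of_le_of_ne b.2 fun h => hn0 ?_
    rw [ENNReal.coe_eq_zero]; exact NNReal.coe_eq_zero.1 h.symm
  rw [← ENNReal.ofReal_coe_nnreal]
  apply ENNReal.ofReal_le_ofReal
  have h3 : (p : ℝ) * ((1/2) ^ Fintype.card m * (1/2) ^ Fintype.card n) ≤ r ^ Fintype.card m := by
    have : 0 < (a : ℝ) * b := by positivity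
    refine le_of_mul_le_mul_right ?_ this
    linarith
  have h4 := mul_le_mul_of_nonneg_right h3
    (show (0:ℝ) ≤ 2 ^ Fintype.card m * 2 ^ Fintype.card n by positivity)
  calc (p : ℝ) = p * ((1/2) ^ Fintype.card m * (1/2) ^ Fintype.card n) *
        (2 ^ Fintype.card m * 2 ^ Fintype.card n) := by
        have e1 : ((1:ℝ)/2) ^ Fintype.card m * 2 ^ Fintype.card m = 1 := by
          rw [← mul_pow]; norm_num
        have e2 : ((1:ℝ)/2) ^ Fintype.card n * 2 ^ Fintype.card n = 1 := by
          rw [← mul_pow]; norm_num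
        calc (p : ℝ) = p * (((1:ℝ)/2) ^ Fintype.card m * 2 ^ Fintype.card m) *
            (((1:ℝ)/2) ^ Fintype.card n * 2 ^ Fintype.card n) := by rw [e1, e2]; ring
          _ = _ := by ring
    _ ≤ _ := h4
    _ = _ := by rw [mul_pow]; ring

/-- the orthogonal matrices whose lower-left block has a small singular value -/
def bad (m n : Type*) [Fintype m] [Fintype n] [DecidableEq m] [DecidableEq n] (t : ℝ) :
    Set (Matrix (m ⊕ n) (m ⊕ n) ℝ) :=
  {O | Oᵀ * O = 1 ∧ ∃ w : n → ℝ, w ⬝ᵥ w = 1 ∧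
    ((Oᵀ *ᵥ Sum.elim 0 w) ∘ Sum.inl) ⬝ᵥ ((Oᵀ *ᵥ Sum.elim 0 w) ∘ Sum.inl) ≤ t ^ 2}

lemma dot_elim (w : n → ℝ) :
    (Sum.elim 0 w : m ⊕ n → ℝ) ⬝ᵥ (Sum.elim 0 w : m ⊕ n → ℝ) = w ⬝ᵥ w := by
  rw [dot_sum]; simp

lemma meas_elim : Measurable (fun w : n → ℝ => (Sum.elim 0 w : m ⊕ n → ℝ)) := by
  rw [measurable_pi_iff]
  rintro (i | i)
  · exact measurable_const
  · exact measurable_pi_apply i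

lemma bad_bound [DecidableEq m] [DecidableEq n] {ν : Measure (Matrix (m ⊕ n) (m ⊕ n) ℝ)}
    (hν : IsHaarSO (m ⊕ n) ν) (t : ℝ) (ht : 0 < t) (ht2 : t ≤ 1 / 2) :
    ν (bad m n t) ≤ ENNReal.ofReal ((4 / t) ^ Fintype.card n * (8 * t) ^ Fintype.card m) := by
  have := hν.1
  set q := ENNReal.ofReal ((2 * (4 * t)) ^ Fintype.card m * 2 ^ Fintype.card n) with hq
  set G : Set (Matrix (m ⊕ n) (m ⊕ n) ℝ × (n → ℝ)) :=
    {p | (p.2 ∈ bl n 2 ∧ 1 / 4 ≤ p.2 ⬝ᵥ p.2) ∧ p.1ᵀ *ᵥ Sum.elim 0 p.2 ∈ cone m n (4 * t)} with hG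
  have hGm : MeasurableSet G := by
    refine MeasurableSet.inter (MeasurableSet.inter ?_ ?_) ?_
    · exact measurable_snd (meas_bl 2)
    · exact measurable_snd
        (isClosed_le continuous_const (cont_dot continuous_id continuous_id)).measurableSet
    · exact (meas_tmul.comp (measurable_fst.prodMk (meas_elim.comp measurable_snd))) (meas_cone _)
  have hmark := mul_meas_ge_le_lintegral (μ := ν) (measurable_measure_prodMk_left (ν := volume) hGm)
    (volume (bl n t))
  rw [← Measure.prod_apply hGm, Measure.prod_apply_symm hGm] at hmark
  have hup : ∫⁻ y, ν ((fun x => (x, y)) ⁻¹' G) ≤ q * volume (bl n 2) := by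
    rw [← lintegral_indicator_const (meas_bl 2)]
    refine lintegral_mono fun y => ?_
    by_cases hy : y ∈ bl n 2 ∧ 1 / 4 ≤ y ⬝ᵥ y
    · rw [Set.indicator_of_mem hy.1]
      refine le_trans (measure_mono ?_)
        (cone_bound hν (4 * t) (by positivity) (Sum.elim 0 y) ?_)
      · intro O hO
        exact hO.2
      · intro h0
        have := dot_elim (m := m) y
        rw [h0] at this
        simp only [zero_dotProduct] at this
        linarith [hy.2]
    · have : (fun x => (x, y)) ⁻¹' G = ∅ := by
        ext O
        simp only [Set.mem_preimage, Set.mem_empty_iff_false, iff_false]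
        exact fun h => hy h.1
      rw [this, measure_empty]; exact zero_le
  have hsub : bad m n t ⊆ {O | volume (bl n t) ≤ volume (Prod.mk O ⁻¹' G)} := by
    rintro O ⟨hO, w, hw, hwt⟩
    change volume (bl n t) ≤ volume (Prod.mk O ⁻¹' G)
    rw [← measure_preimage_add_right volume (-w) (bl n t)]
    refine measure_mono ?_
    intro v hv
    change (v + -w) ⬝ᵥ (v + -w) ≤ t ^ 2 at hv
    have ht4 : t ^ 2 ≤ 1 / 4 := by nlinarith
    have hvw : v = w + (v + -w) := by abel
    have hwv : w = v + -(v + -w) := by abel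
    have k1 := dot_add_le w (v + -w)
    rw [← hvw] at k1
    have k2 := dot_add_le v (-(v + -w))
    rw [← hwv, neg_dotProduct_neg] at k2
    have kv : 1 / 4 ≤ v ⬝ᵥ v := by linarith
    refine ⟨⟨?_, kv⟩, ?_⟩
    · change v ⬝ᵥ v ≤ 2 ^ 2
      linarith
    · change ((Oᵀ *ᵥ Sum.elim 0 v) ∘ Sum.inl) ⬝ᵥ ((Oᵀ *ᵥ Sum.elim 0 v) ∘ Sum.inl) ≤
        (4 * t) ^ 2 * ((Oᵀ *ᵥ Sum.elim 0 v) ⬝ᵥ (Oᵀ *ᵥ Sum.elim 0 v))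
      rw [orth_dot O hO, dot_elim]
      have e : (Oᵀ *ᵥ Sum.elim 0 v) ∘ Sum.inl = ((Oᵀ *ᵥ Sum.elim 0 w) ∘ Sum.inl +
          (Oᵀ *ᵥ Sum.elim 0 (v + -w)) ∘ Sum.inl : m → ℝ) := by
        have e1 : (Sum.elim 0 v : m ⊕ n → ℝ) =
            (Sum.elim 0 w : m ⊕ n → ℝ) + (Sum.elim 0 (v + -w) : m ⊕ n → ℝ) := by
          ext (i | i) <;> simp
        rw [e1, mulVec_add]; rfl
      have k3 := dot_add_le ((Oᵀ *ᵥ Sum.elim 0 w) ∘ Sum.inl : m → ℝ)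
        ((Oᵀ *ᵥ Sum.elim 0 (v + -w)) ∘ Sum.inl)
      rw [← e] at k3
      have k4 := orth_dot O hO (Sum.elim 0 (v + -w))
      rw [dot_elim, dot_sum] at k4
      have k5 := dot_nonneg ((Oᵀ *ᵥ Sum.elim 0 (v + -w)) ∘ Sum.inr : n → ℝ)
      nlinarith
  have h2 := (mul_le_mul_right (measure_mono (μ := ν) hsub) (volume (bl n t))).trans
    (hmark.trans hup)
  rw [vol_bl (ι := n) ht, vol_bl (ι := n) (r := 2) (by norm_num)] at h2
  have hn0 := vol_bl_pos (ι := n)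
  have hn1 := vol_bl_lt (ι := n) 1
  have hne : ν (bad m n t) ≠ ⊤ := measure_ne_top _ _
  rw [hq] at h2
  generalize ν (bad m n t) = p at *
  generalize volume (bl n 1) = b at *
  lift p to NNReal using hne
  lift b to NNReal using hn1
  have hb : 0 < (b : ℝ) := by
    refine lt_of_le_of_ne b.2 fun h => hn0 ?_
    rw [ENNReal.coe_eq_zero]; exact NNReal.coe_eq_zero.1 h.symm
  rw [← ENNReal.toReal_le_toReal (by finiteness) (by finiteness)] at h2
  simp only [ENNReal.toReal_mul, ENNReal.toReal_pow, ENNReal.coe_toReal,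
    ENNReal.toReal_ofReal ht.le, ENNReal.toReal_ofReal (show (0:ℝ) ≤ 2 by norm_num)] at h2
  rw [ENNReal.toReal_ofReal (by positivity)] at h2
  rw [← ENNReal.ofReal_coe_nnreal]
  apply ENNReal.ofReal_le_ofReal
  have h3 : t ^ Fintype.card n * (p : ℝ) ≤
      (2 * (4 * t)) ^ Fintype.card m * 2 ^ Fintype.card n * 2 ^ Fintype.card n := by
    refine le_of_mul_le_mul_right ?_ hb
    linarith
  rw [div_pow, div_mul_eq_mul_div, le_div_iff₀ (by positivity)]
  have e4 : (4:ℝ) ^ Fintype.card n = 2 ^ Fintype.card n * 2 ^ Fintype.card n := by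
    rw [← mul_pow]; norm_num
  rw [e4, show 8 * t = 2 * (4 * t) by ring]
  linarith

end geom

section det
open scoped Matrix.Norms.L2Operator

lemma specNorm_eq {m n : Type*} [Fintype m] [Fintype n] [DecidableEq n] (A : Matrix m n ℝ) :
    specNorm A = ‖A‖ := rfl

lemma l2_one_le (n : Type*) [Fintype n] [DecidableEq n] : ‖(1 : Matrix n n ℝ)‖ ≤ 1 := by
  have h := Matrix.l2_opNorm_conjTranspose_mul_self (1 : Matrix n n ℝ)
  simp only [Matrix.conjTranspose_one, Matrix.one_mul] at h
  by_contra hc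
  push Not at hc
  nlinarith

lemma l2_le_one_of {m n : Type*} [Fintype m] [Fintype n] [DecidableEq n] [DecidableEq m]
    (E : Matrix m n ℝ) (hE : Eᵀ * E = 1) : ‖E‖ ≤ 1 := by
  have h := Matrix.l2_opNorm_conjTranspose_mul_self E
  rw [Matrix.conjTranspose_eq_transpose_of_trivial, hE] at h
  have := l2_one_le n
  nlinarith [norm_nonneg E]

lemma l2_transpose {m n : Type*} [Fintype m] [Fintype n] [DecidableEq n] [DecidableEq m]
    (E : Matrix m n ℝ) : ‖Eᵀ‖ = ‖E‖ := by
  rw [← Matrix.conjTranspose_eq_transpose_of_trivial, Matrix.l2_opNorm_conjTranspose]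

lemma l2_sandwich {a b c d : Type*} [Fintype a] [Fintype b] [Fintype c] [Fintype d]
    [DecidableEq a] [DecidableEq b] [DecidableEq c] [DecidableEq d]
    (E : Matrix b a ℝ) (hE : Eᵀ * E = 1) (F : Matrix c d ℝ) (hF : Fᵀ * F = 1)
    (O : Matrix b c ℝ) : ‖Eᵀ * O * F‖ ≤ ‖O‖ := by
  have h1 := Matrix.l2_opNorm_mul (Eᵀ * O) F
  have h2 := Matrix.l2_opNorm_mul Eᵀ O
  have h3 := l2_le_one_of E hE
  have h4 := l2_le_one_of F hF
  rw [l2_transpose] at h2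
  have h5 : ‖E‖ * ‖O‖ ≤ 1 * ‖O‖ := by gcongr
  have h6 : ‖Eᵀ * O‖ * ‖F‖ ≤ ‖Eᵀ * O‖ * 1 := by gcongr
  linarith

section blocks
variable {m n : Type*} [Fintype m] [Fintype n] [DecidableEq n] [DecidableEq m]

lemma inl_isom : (fromRows (1 : Matrix m m ℝ) (0 : Matrix n m ℝ))ᵀ *
    fromRows (1 : Matrix m m ℝ) (0 : Matrix n m ℝ) = 1 := by
  rw [transpose_fromRows, fromCols_mul_fromRows]; simp

lemma inr_isom : (fromRows (0 : Matrix m n ℝ) (1 : Matrix n n ℝ))ᵀ *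
    fromRows (0 : Matrix m n ℝ) (1 : Matrix n n ℝ) = 1 := by
  rw [transpose_fromRows, fromCols_mul_fromRows]; simp

lemma l2_block11 (O : Matrix (m ⊕ n) (m ⊕ n) ℝ) : ‖O.toBlocks₁₁‖ ≤ ‖O‖ := by
  refine le_trans (le_of_eq (congrArg _ ?_)) (l2_sandwich _ (inl_isom (m := m) (n := n)) _ (inl_isom (m := m) (n := n)) O)
  conv_rhs => rw [← fromBlocks_toBlocks O]
  rw [transpose_fromRows, fromCols_mul_fromBlocks, fromCols_mul_fromRows]; simp

lemma l2_block12 (O : Matrix (m ⊕ n) (m ⊕ n) ℝ) : ‖O.toBlocks₁₂‖ ≤ ‖O‖ := by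
  refine le_trans (le_of_eq (congrArg _ ?_)) (l2_sandwich _ (inl_isom (m := m) (n := n)) _ (inr_isom (m := m) (n := n)) O)
  conv_rhs => rw [← fromBlocks_toBlocks O]
  rw [transpose_fromRows, fromCols_mul_fromBlocks, fromCols_mul_fromRows]; simp

lemma l2_block21 (O : Matrix (m ⊕ n) (m ⊕ n) ℝ) : ‖O.toBlocks₂₁‖ ≤ ‖O‖ := by
  refine le_trans (le_of_eq (congrArg _ ?_)) (l2_sandwich _ (inr_isom (m := m) (n := n)) _ (inl_isom (m := m) (n := n)) O)
  conv_rhs => rw [← fromBlocks_toBlocks O]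
  rw [transpose_fromRows, fromCols_mul_fromBlocks, fromCols_mul_fromRows]; simp

lemma l2_block22 (O : Matrix (m ⊕ n) (m ⊕ n) ℝ) : ‖O.toBlocks₂₂‖ ≤ ‖O‖ := by
  refine le_trans (le_of_eq (congrArg _ ?_)) (l2_sandwich _ (inr_isom (m := m) (n := n)) _ (inr_isom (m := m) (n := n)) O)
  conv_rhs => rw [← fromBlocks_toBlocks O]
  rw [transpose_fromRows, fromCols_mul_fromBlocks, fromCols_mul_fromRows]; simp

lemma inv_bound (D : Matrix n n ℝ) (δ : ℝ) (hδ : 0 < δ) (hD : ‖D‖ ≤ 1 - δ) :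
    IsUnit (1 + D).det ∧ ‖(1 + D)⁻¹‖ ≤ 1 / δ := by
  have hu : IsUnit (1 + D) := by
    have := isUnit_one_sub_of_norm_lt_one (x := -D) (by rw [norm_neg]; linarith)
    simpa using this
  have hd := (Matrix.isUnit_iff_isUnit_det _).1 hu
  refine ⟨hd, ?_⟩
  have h1 : (1 + D)⁻¹ = 1 - D * (1 + D)⁻¹ := by
    have := Matrix.mul_nonsing_inv (1 + D) hd
    rw [Matrix.add_mul, Matrix.one_mul] at this
    exact eq_sub_of_add_eq this
  have h2 : ‖(1 + D)⁻¹‖ ≤ 1 + (1 - δ) * ‖(1 + D)⁻¹‖ := by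
    calc ‖(1 + D)⁻¹‖ = ‖1 - D * (1 + D)⁻¹‖ := by rw [← h1]
      _ ≤ ‖(1 : Matrix n n ℝ)‖ + ‖D * (1 + D)⁻¹‖ := norm_sub_le _ _
      _ ≤ 1 + ‖D‖ * ‖(1 + D)⁻¹‖ := add_le_add (l2_one_le n) (Matrix.l2_opNorm_mul _ _)
      _ ≤ _ := by gcongr
  rw [le_div_iff₀ hδ]
  linarith

lemma l2_le_of_vec (D : Matrix n n ℝ) (s : ℝ) (hs : 0 ≤ s)
    (h : ∀ w : n → ℝ, w ⬝ᵥ w = 1 → (D *ᵥ w) ⬝ᵥ (D *ᵥ w) ≤ s ^ 2) : ‖D‖ ≤ s := by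
  rw [Matrix.l2_opNorm_def]
  refine ContinuousLinearMap.opNorm_le_of_unit_norm hs ?_
  intro x hx
  have hx2 : x.ofLp ⬝ᵥ x.ofLp = 1 := by
    have := EuclideanSpace.real_norm_sq_eq x
    rw [hx] at this
    simp only [dotProduct, ← pow_two]
    rw [← this]; norm_num
  have h3 := h _ hx2
  refine (sq_le_sq₀ (norm_nonneg _) hs).1 ?_
  rw [EuclideanSpace.real_norm_sq_eq]
  refine le_trans (le_of_eq ?_) h3
  simp [dotProduct, pow_two]
end blocks

lemma schur_lip {M N : ℕ} (O₁ O₂ : Matrix (Fin M ⊕ Fin N) (Fin M ⊕ Fin N) ℝ)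
    (δ : ℝ) (hδ : 0 < δ) (hO : ‖O₁‖ ≤ 1) (hD : ‖O₁.toBlocks₂₂‖ ≤ 1 - δ)
    (hd : ‖O₁ - O₂‖ ≤ δ / 2) :
    ‖schurLike O₁ - schurLike O₂‖ ≤ (1 + 5 * (1 / (δ / 2)) + 2 * (1 / (δ / 2)) ^ 2) * ‖O₁ - O₂‖ := by
  set d := ‖O₁ - O₂‖ with hdd
  set K := 1 / (δ / 2) with hK
  have hK0 : 0 < K := by positivity
  have hδ1 : δ ≤ 1 := by linarith [norm_nonneg O₁.toBlocks₂₂]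
  have hO2 : ‖O₂‖ ≤ 2 := by
    have : O₂ = O₁ - (O₁ - O₂) := by abel
    rw [this]
    refine (norm_sub_le _ _).trans ?_
    linarith
  have e11 : ‖O₁.toBlocks₁₁ - O₂.toBlocks₁₁‖ ≤ d := l2_block11 (O₁ - O₂)
  have e12 : ‖O₁.toBlocks₁₂ - O₂.toBlocks₁₂‖ ≤ d := l2_block12 (O₁ - O₂)
  have e21 : ‖O₁.toBlocks₂₁ - O₂.toBlocks₂₁‖ ≤ d := l2_block21 (O₁ - O₂)
  have e22 : ‖O₁.toBlocks₂₂ - O₂.toBlocks₂₂‖ ≤ d := l2_block22 (O₁ - O₂)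
  have c1 : ‖O₁.toBlocks₂₁‖ ≤ 1 := (l2_block21 _).trans hO
  have b2 : ‖O₂.toBlocks₁₂‖ ≤ 2 := (l2_block12 _).trans hO2
  have hD2 : ‖O₂.toBlocks₂₂‖ ≤ 1 - δ / 2 := by
    have : O₂.toBlocks₂₂ = O₁.toBlocks₂₂ - (O₁.toBlocks₂₂ - O₂.toBlocks₂₂) := by abel
    rw [this]
    refine (norm_sub_le _ _).trans ?_
    linarith
  obtain ⟨u1, r1⟩ := inv_bound O₁.toBlocks₂₂ (δ / 2) (by positivity) (by linarith)
  obtain ⟨u2, r2⟩ := inv_bound O₂.toBlocks₂₂ (δ / 2) (by positivity) hD2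
  unfold schurLike
  generalize O₁.toBlocks₁₁ = A1, O₂.toBlocks₁₁ = A2, O₁.toBlocks₁₂ = B1, O₂.toBlocks₁₂ = B2,
    O₁.toBlocks₂₁ = C1, O₂.toBlocks₂₁ = C2, O₁.toBlocks₂₂ = D1, O₂.toBlocks₂₂ = D2 at *
  rw [← hK] at r1 r2
  have hR : (1 + D1)⁻¹ - (1 + D2)⁻¹ = -((1 + D1)⁻¹ * (D1 - D2) * (1 + D2)⁻¹) := by
    have : D1 - D2 = (1 + D1) - (1 + D2) := by abel
    rw [this, Matrix.mul_sub, Matrix.sub_mul, Matrix.nonsing_inv_mul _ u1, Matrix.one_mul,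
      Matrix.mul_assoc, Matrix.mul_nonsing_inv _ u2, Matrix.mul_one]
    abel
  generalize (1 + D1)⁻¹ = R1, (1 + D2)⁻¹ = R2 at *
  have key : A1 - B1 * R1 * C1 - (A2 - B2 * R2 * C2) =
      (A1 - A2) - (B1 - B2) * R1 * C1 - B2 * (R1 - R2) * C1 - B2 * R2 * (C1 - C2) := by
    simp only [Matrix.mul_sub, Matrix.sub_mul]
    abel
  have hd0 : 0 ≤ d := norm_nonneg _
  have tri : ∀ (a b c : ℕ) (X : Matrix (Fin a) (Fin N) ℝ) (Y : Matrix (Fin N) (Fin b) ℝ)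
      (Z : Matrix (Fin b) (Fin c) ℝ) (x y z : ℝ), ‖X‖ ≤ x → ‖Y‖ ≤ y → ‖Z‖ ≤ z →
      ‖X * Y * Z‖ ≤ x * y * z := by
    intro a b c X Y Z x y z hx hy hz
    have hx0 := (norm_nonneg X).trans hx
    have hy0 := (norm_nonneg Y).trans hy
    refine (Matrix.l2_opNorm_mul _ _).trans ?_
    refine mul_le_mul ((Matrix.l2_opNorm_mul _ _).trans ?_) hz (norm_nonneg _) (by positivity)
    exact mul_le_mul hx hy (norm_nonneg _) hx0
  have f1 := tri _ _ _ (B1 - B2) R1 C1 _ _ _ e12 r1 c1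
  have f0 : ‖R1 - R2‖ ≤ K * d * K := by
    rw [hR, norm_neg]; exact tri _ _ _ _ _ _ _ _ _ r1 e22 r2
  have f2 := tri _ _ _ B2 (R1 - R2) C1 _ _ _ b2 f0 c1
  have f3 := tri _ _ _ B2 R2 (C1 - C2) _ _ _ b2 r2 e21
  rw [key]
  have g1 := norm_sub_le ((A1 - A2) - (B1 - B2) * R1 * C1 - B2 * (R1 - R2) * C1) (B2 * R2 * (C1 - C2))
  have g2 := norm_sub_le ((A1 - A2) - (B1 - B2) * R1 * C1) (B2 * (R1 - R2) * C1)
  have g3 := norm_sub_le (A1 - A2) ((B1 - B2) * R1 * C1)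
  nlinarith [mul_nonneg hK0.le hd0]

lemma good_bound {m n : Type*} [Fintype m] [Fintype n] [DecidableEq n] [DecidableEq m]
    (O : Matrix (m ⊕ n) (m ⊕ n) ℝ) (hO : Oᵀ * O = 1) (t : ℝ) (ht : 0 < t) (ht2 : t ≤ 1 / 2)
    (hb : O ∉ bad m n t) : ‖O.toBlocks₂₂‖ ≤ 1 - t ^ 2 / 2 := by
  rw [← l2_transpose]
  have ht4 : t ^ 2 ≤ 1 / 4 := by nlinarith
  refine l2_le_of_vec _ _ (by linarith) fun w hw => ?_
  have h1 := orth_dot O hO (Sum.elim 0 w)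
  rw [dot_elim, dot_sum, hw] at h1
  have h2 : t ^ 2 < ((Oᵀ *ᵥ Sum.elim 0 w) ∘ Sum.inl) ⬝ᵥ ((Oᵀ *ᵥ Sum.elim 0 w) ∘ Sum.inl) := by
    by_contra hc
    exact hb ⟨hO, w, hw, not_lt.1 hc⟩
  have h3 : (Oᵀ *ᵥ Sum.elim 0 w) ∘ Sum.inr = O.toBlocks₂₂ᵀ *ᵥ w := by
    ext i
    simp [mulVec, dotProduct, Fintype.sum_sum_type, toBlocks₂₂]
  rw [h3] at h1
  nlinarith [sq_nonneg (t ^ 2)]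

end det

lemma num_bound (C s : ℝ) (hC : 0 < C) (hs : s = (64 : ℝ) ^ (-1 / C)) (M N : ℕ)
    (hM : (1 + C) * N ≤ (M : ℝ)) :
    (4 / (s / 8)) ^ N * (8 * (s / 8)) ^ M ≤ (1 / 2 : ℝ) ^ N := by
  have hs0 : 0 < s := by rw [hs]; positivity
  have hs1 : s ≤ 1 := by
    rw [hs]; apply Real.rpow_le_one_of_one_le_of_nonpos (by norm_num)
    rw [neg_div]; have : 0 < 1 / C := by positivity
    linarith
  have hsC : s ^ C = 1 / 64 := by
    rw [hs, ← Real.rpow_mul (by norm_num), div_mul_cancel₀ _ hC.ne', Real.rpow_neg_one]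
    norm_num
  have h1 : s ^ M ≤ (s * (1 / 64)) ^ N := by
    rw [← hsC]
    calc s ^ M = s ^ (M : ℝ) := (Real.rpow_natCast _ _).symm
      _ ≤ s ^ ((1 + C) * N) := Real.rpow_le_rpow_of_exponent_ge hs0 hs1 hM
      _ = (s ^ (1 + C)) ^ N := by rw [Real.rpow_mul hs0.le, Real.rpow_natCast]
      _ = _ := by rw [Real.rpow_add hs0, Real.rpow_one]
  calc (4 / (s / 8)) ^ N * (8 * (s / 8)) ^ M = (32 / s) ^ N * s ^ M := by
        congr 2
        · field_simp; norm_num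
        · ring
    _ ≤ (32 / s) ^ N * (s * (1 / 64)) ^ N := by gcongr
    _ = _ := by
      rw [← mul_pow]; congr 1; field_simp; norm_num

/-- If `O₁` is Haar on `SO(T̄)`, `O₂` almost surely has no eigenvalue `−1`, and
`‖O₁ − O₂‖₂ < N^{−1+ε}` with probability tending to one, then, writing the matrices in block
form according to `T̄ = (T̄−N) + N`, also
`‖(A₁ − B₁(1+D₁)⁻¹C₁) − (A₂ − B₂(1+D₂)⁻¹C₂)‖₂ < N^{−1+ε}` with probability tending to one. -/
theorem schur_blocks_match (k : ℕ) (hk : 0 < k) (C₁ C₂ : ℝ) (hC₁ : 0 < C₁) (hC₂ : 0 < C₂)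
    (Mdim : ℕ → ℕ)
    (hratio : ∀ N : ℕ, 0 < N →
      (k + 1 + C₁ : ℝ) ≤ ((Mdim N + N : ℕ) : ℝ) / N ∧ ((Mdim N + N : ℕ) : ℝ) / N ≤ C₂)
    (Ω : ℕ → Type*) (mΩ : ∀ N, MeasurableSpace (Ω N))
    (P : ∀ N, Measure (Ω N)) (hP : ∀ N, IsProbabilityMeasure (P N))
    (O₁ O₂ : ∀ N : ℕ, Ω N → Matrix (Fin (Mdim N) ⊕ Fin N) (Fin (Mdim N) ⊕ Fin N) ℝ)
    (hO₁meas : ∀ N, Measurable (O₁ N))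
    (hHaar : ∀ N, IsHaarSO (Fin (Mdim N) ⊕ Fin N) ((P N).map (O₁ N)))
    (hO₂eig : ∀ N, ∀ᵐ ω ∂P N,
      (-1 : ℂ) ∉ spectrum ℂ ((O₂ N ω).map (algebraMap ℝ ℂ)))
    (hclose : ∀ ε > (0 : ℝ),
      Tendsto (fun N : ℕ => P N {ω | specNorm (O₁ N ω - O₂ N ω) < (N : ℝ) ^ (-1 + ε)})
        atTop (nhds 1)) :
    ∀ ε > (0 : ℝ),
      Tendsto
        (fun N : ℕ =>
          P N {ω | specNorm (schurLike (O₁ N ω) - schurLike (O₂ N ω)) < (N : ℝ) ^ (-1 + ε)})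
        atTop (nhds 1) := by
  intro ε hε
  set s : ℝ := (64 : ℝ) ^ (-1 / C₁) with hs
  have hs0 : 0 < s := by rw [hs]; positivity
  have hs1 : s ≤ 1 := by
    rw [hs]; apply Real.rpow_le_one_of_one_le_of_nonpos (by norm_num)
    rw [neg_div]; have : 0 < 1 / C₁ := by positivity
    linarith
  set t : ℝ := s / 8 with ht
  have ht0 : 0 < t := by positivity
  have ht1 : t ≤ 1 / 2 := by linarith
  set δ : ℝ := t ^ 2 / 2 with hδ
  have hδ0 : 0 < δ := by positivity
  set L : ℝ := 1 + 5 * (1 / (δ / 2)) + 2 * (1 / (δ / 2)) ^ 2 with hL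
  have hL0 : 0 < L := by positivity
  set e : ℝ := min (ε / 2) (1 / 2) with he
  have he0 : 0 < e := by positivity
  have he1 : e ≤ ε / 2 := min_le_left _ _
  have he2 : e ≤ 1 / 2 := min_le_right _ _
  have hlim1 : Tendsto (fun N : ℕ => (N : ℝ) ^ (-1 + e)) atTop (nhds 0) := by
    have := (tendsto_rpow_neg_atTop (y := 1 - e) (by linarith)).comp tendsto_natCast_atTop_atTop
    refine this.congr fun N => ?_
    simp only [Function.comp]
    congr 1; ring
  have hlim2 : Tendsto (fun N : ℕ => (N : ℝ) ^ (ε / 2)) atTop atTop :=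
    (tendsto_rpow_atTop (by linarith)).comp tendsto_natCast_atTop_atTop
  have hg : Tendsto (fun N : ℕ => ENNReal.ofReal ((1 / 2 : ℝ) ^ N)) atTop (nhds 0) := by
    have := ENNReal.tendsto_ofReal
      (tendsto_pow_atTop_nhds_zero_of_lt_one (r := (1 / 2 : ℝ)) (by norm_num) (by norm_num))
    simpa using this
  have hlow := ENNReal.Tendsto.sub (hclose e he0) hg (Or.inl ENNReal.one_ne_top)
  rw [tsub_zero] at hlow
  refine tendsto_of_tendsto_of_tendsto_of_le_of_le' hlow tendsto_const_nhds ?_ ?_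
  · filter_upwards [hlim1.eventually (gt_mem_nhds (show (0 : ℝ) < δ / 2 by positivity)),
      hlim2.eventually_ge_atTop L, eventually_gt_atTop 0] with N h1 h2 hN
    have hNr : (0 : ℝ) < N := by exact_mod_cast hN
    rw [tsub_le_iff_right]
    have hbad : P N (O₁ N ⁻¹' bad (Fin (Mdim N)) (Fin N) t) ≤ ENNReal.ofReal ((1 / 2 : ℝ) ^ N) := by
      refine (Measure.le_map_apply (hO₁meas N).aemeasurable _).trans ?_
      refine (bad_bound (hHaar N) t ht0 ht1).trans ?_
      rw [Fintype.card_fin, Fintype.card_fin]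
      apply ENNReal.ofReal_le_ofReal
      refine num_bound C₁ s hC₁ hs _ _ ?_
      have h3 := (hratio N hN).1
      rw [le_div_iff₀ hNr] at h3
      push_cast at h3
      have hk1 : (1 : ℝ) ≤ k := by exact_mod_cast hk
      nlinarith
    have hae : ∀ᵐ ω ∂P N, (O₁ N ω)ᵀ * O₁ N ω = 1 ∧ (O₁ N ω).det = 1 :=
      ae_of_ae_map (hO₁meas N).aemeasurable (hHaar N).2.1
    refine le_trans ?_ ((measure_union_le _ _).trans (add_le_add le_rfl hbad))
    refine measure_mono_ae ?_
    filter_upwards [hae] with ω hω hc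
    by_cases hb : O₁ N ω ∈ bad (Fin (Mdim N)) (Fin N) t
    · exact Or.inr hb
    · left
      change specNorm (O₁ N ω - O₂ N ω) < (N : ℝ) ^ (-1 + e) at hc
      change specNorm (schurLike (O₁ N ω) - schurLike (O₂ N ω)) < (N : ℝ) ^ (-1 + ε)
      rw [specNorm_eq] at hc ⊢
      have hlip := schur_lip (O₁ N ω) (O₂ N ω) δ hδ0 (l2_le_one_of _ hω.1)
        (good_bound _ hω.1 t ht0 ht1 hb) (hc.le.trans h1.le)
      refine hlip.trans_lt ?_
      have hN1 : (1 : ℝ) ≤ N := by exact_mod_cast hN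
      calc L * _ < L * (N : ℝ) ^ (-1 + e) := mul_lt_mul_of_pos_left hc hL0
        _ ≤ (N : ℝ) ^ (ε / 2) * (N : ℝ) ^ (-1 + ε / 2) :=
          mul_le_mul h2 (Real.rpow_le_rpow_of_exponent_le hN1 (by linarith))
            (by positivity) (by positivity)
        _ = (N : ℝ) ^ (-1 + ε) := by rw [← Real.rpow_add hNr]; congr 1; ring
  · exact Eventually.of_forall fun N => by
      have := hP N
      exact prob_le_one

end
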